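/- Let 𝓑 ⊂ {1,...,N} and let 𝓔 be the σ-algebra generated by {X_n : n ∈ 𝓑}. Then there is a constant C₂ ≥ 1, depending only on the ellipticity constant C, such that for every n ∉ 𝓑 and almost every sample point: C₂^{-1} Var(Y_n) ≤ Var(Y_n | 𝓔) ≤ C₂ Var(Y_n). -/

import Mathlib

open MeasureTheory ProbabilityTheory Filter Finset
open scoped ENNReal Topology

noncomputable section

namespace EdgeworthMC

variable {Ω E : Type*} [MeasurableSpace Ω] [MeasurableSpace E]

/-- The standard Gaussian density `𝔤(u) = (2π)^{-1/2} e^{-u²/2}`. -/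
def gaussDensity (u : ℝ) : ℝ := (Real.sqrt (2 * Real.pi))⁻¹ * Real.exp (-u ^ 2 / 2)

/-- `UEChain μ X κ C` : the process `X` is a Markov chain (with respect to the probability
measure `μ`) with transition kernels `κ n` from the state at time `n` to the state at time
`n+1`, and the chain is uniformly elliptic with ellipticity constant `C`:
`C⁻¹ ℙ(X_{n+1} ∈ A) ≤ ℙ(X_{n+1} ∈ A | X_n = x) ≤ C ℙ(X_{n+1} ∈ A)` for a.e. `x`. -/
def UEChain (μ : Measure Ω) (X : ℕ → Ω → E) (κ : ℕ → Kernel E E) (C : ℝ) : Prop :=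
  IsProbabilityMeasure μ ∧
  (∀ n, Measurable (X n)) ∧
  (∀ n, IsMarkovKernel (κ n)) ∧
  (∀ n (A : Set E), MeasurableSet A →
      (μ[fun ω => A.indicator (fun _ => (1 : ℝ)) (X (n + 1) ω) |
          ⨆ i : Fin (n + 1), MeasurableSpace.comap (X i) (inferInstance : MeasurableSpace E)]
        =ᵐ[μ] fun ω => (κ n (X n ω) A).toReal)) ∧
  (∀ n (A : Set E), MeasurableSet A → ∀ᵐ ω ∂μ,
      κ n (X n ω) A ≤ ENNReal.ofReal C * Measure.map (X (n + 1)) μ A ∧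
      Measure.map (X (n + 1)) μ A ≤ ENNReal.ofReal C * κ n (X n ω) A)

/-- Partial sums `S_N = ∑_{n=1}^N f_n(X_n)`. -/
def S (X : ℕ → Ω → E) (f : ℕ → E → ℤ) (N : ℕ) (ω : Ω) : ℤ :=
  ∑ n ∈ Finset.Icc 1 N, f n (X n ω)

/-- `V_N = Var(S_N)`. -/
def VN (μ : Measure Ω) (X : ℕ → Ω → E) (f : ℕ → E → ℤ) (N : ℕ) : ℝ :=
  variance (fun ω => ((S X f N ω : ℝ))) μ

/-- `σ_N = √V_N`. -/
def sigN (μ : Measure Ω) (X : ℕ → Ω → E) (f : ℕ → E → ℤ) (N : ℕ) : ℝ :=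
  Real.sqrt (VN μ X f N)

/-- `a_N = 𝔼(S_N)`. -/
def meanS (μ : Measure Ω) (X : ℕ → Ω → E) (f : ℕ → E → ℤ) (N : ℕ) : ℝ :=
  ∫ ω, ((S X f N ω : ℝ)) ∂μ

/-- The second largest value among the (finitely many) values of `p`, counted with
multiplicity: it equals `min_j max_{j' ≠ j} p j'`. -/
def secondLargest {ι : Type*} (p : ι → ℝ) : ℝ := ⨅ j, sSup (p '' {j}ᶜ)

/-- `q_n(m)` : the second largest value among `ℙ(Y_n ≡ j mod m)`, `j = 0,…,m-1`. -/
def qres (μ : Measure Ω) (X : ℕ → Ω → E) (f : ℕ → E → ℤ) (n m : ℕ) : ℝ :=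
  secondLargest (fun j : ZMod m => (μ {ω | ((f n (X n ω) : ZMod m)) = j}).toReal)

/-- `M_N = min_{2 ≤ m ≤ 2K} ∑_{n=1}^N q_n(m)`. -/
def MN (μ : Measure Ω) (X : ℕ → Ω → E) (f : ℕ → E → ℤ) (K N : ℕ) : ℝ :=
  sInf ((fun m => ∑ n ∈ Finset.Icc 1 N, qres μ X f n m) '' (Set.Icc 2 (2 * K)))

/-- `S_N` obeys the Edgeworth expansion of order `r` : there are polynomials `P_{b,N}`,
with coefficients uniformly bounded in `N` and degrees not depending on `N`, such that
uniformly in `k ∈ ℤ`,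
`ℙ(S_N = k) = ∑_{b=1}^r σ_N^{-b} P_{b,N}(k_N) 𝔤(k_N) + o(σ_N^{-r})`
where `k_N = (k - 𝔼 S_N)/σ_N`. -/
def Edgeworth (μ : Measure Ω) (X : ℕ → Ω → E) (f : ℕ → E → ℤ) (r : ℕ) : Prop :=
  ∃ (D : ℕ) (Cb : ℝ) (P : ℕ → ℕ → Polynomial ℝ),
    (∀ b N, (P b N).natDegree ≤ D) ∧
    (∀ b N i, |(P b N).coeff i| ≤ Cb) ∧
    ∀ ε > 0, ∃ N₀, ∀ N ≥ N₀, ∀ k : ℤ,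
      |(μ {ω | S X f N ω = k}).toReal -
          ∑ b ∈ Finset.Icc 1 r, (sigN μ X f N)⁻¹ ^ b *
            (P b N).eval (((k : ℝ) - meanS μ X f N) / sigN μ X f N) *
            gaussDensity (((k : ℝ) - meanS μ X f N) / sigN μ X f N)|
        ≤ ε * (sigN μ X f N)⁻¹ ^ r

/-- The σ-algebra generated by `X_{j 1}, …, X_{j ℓ}`. -/
def sigmaOf (X : ℕ → Ω → E) {ℓ : ℕ} (j : Fin ℓ → ℕ) : MeasurableSpace Ω :=
  ⨆ i : Fin ℓ, MeasurableSpace.comap (X (j i)) (inferInstance : MeasurableSpace E)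

/-- Conditional probability of the event `s` given the σ-algebra `m`. -/
def condProb (μ : Measure Ω) (m : MeasurableSpace Ω) (s : Set Ω) : Ω → ℝ :=
  μ[s.indicator (fun _ => (1 : ℝ)) | m]

/-- `S_N` obeys the Edgeworth expansion of order `r` in a conditionally stable way:
for every `ℓ`, the order `r` Edgeworth expansion holds for the conditional law of `S_N`
given `X_{j_1},…,X_{j_ℓ}`, with error term `o_ℓ(σ_N^{-r})` and polynomial coefficient
bounds depending only on `ℓ` (and `r`), uniformly over all choices of indices
`1 ≤ j_1,…,j_ℓ ≤ N`. -/
def CondStableEdgeworth (μ : Measure Ω) (X : ℕ → Ω → E) (f : ℕ → E → ℤ) (r : ℕ) : Prop :=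
  ∀ ℓ : ℕ, ∃ (D : ℕ) (Cb : ℝ), ∀ ε > 0, ∃ N₀, ∀ N ≥ N₀,
    ∀ j : Fin ℓ → ℕ, (∀ i, j i ∈ Finset.Icc 1 N) →
      ∃ P : ℕ → Ω → Polynomial ℝ,
        (∀ b ω, (P b ω).natDegree ≤ D) ∧
        (∀ b ω i, |(P b ω).coeff i| ≤ Cb) ∧
        ∀ᵐ ω ∂μ, ∀ k : ℤ,
          |condProb μ (sigmaOf X j) {ω' | S X f N ω' = k} ω -
              ∑ b ∈ Finset.Icc 1 r, (sigN μ X f N)⁻¹ ^ b *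
                (P b ω).eval (((k : ℝ) -
                    (μ[fun ω' => ((S X f N ω' : ℝ)) | sigmaOf X j]) ω) / sigN μ X f N) *
                gaussDensity (((k : ℝ) -
                    (μ[fun ω' => ((S X f N ω' : ℝ)) | sigmaOf X j]) ω) / sigN μ X f N)|
            ≤ ε * (sigN μ X f N)⁻¹ ^ r

/-- `t` is a resonant point: `t = 2πl/m` with `0 < m ≤ 2K`, `0 ≤ l < m`. -/
def IsResonant (K : ℕ) (t : ℝ) : Prop :=
  ∃ l m : ℕ, 0 < m ∧ m ≤ 2 * K ∧ l < m ∧ t = 2 * Real.pi * l / m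

/-- The conditional characteristic function `𝔼[e^{itS_N} | X_{j_1},…,X_{j_ℓ}]`. -/
def condChar (μ : Measure Ω) (X : ℕ → Ω → E) (f : ℕ → E → ℤ) (t : ℝ) (N : ℕ)
    {ℓ : ℕ} (j : Fin ℓ → ℕ) : Ω → ℂ :=
  μ[fun ω => Complex.exp (Complex.I * (t : ℂ) * ((S X f N ω : ℤ) : ℂ)) | sigmaOf X j]

end EdgeworthMC

namespace EdgeworthMC

variable {Ω E : Type*} [MeasurableSpace Ω] [MeasurableSpace E]

/-- The σ-algebra `𝓔` generated by `{X_n : n ∈ 𝓑}`. -/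
def sigmaFinset (X : ℕ → Ω → E) (𝓑 : Finset ℕ) : MeasurableSpace Ω :=
  ⨆ n ∈ 𝓑, MeasurableSpace.comap (X n) (inferInstance : MeasurableSpace E)

/-- The conditional variance `Var(g | m) = 𝔼[g² | m] - (𝔼[g | m])²`. -/
def condVar (μ : Measure Ω) (m : MeasurableSpace Ω) (g : Ω → ℝ) : Ω → ℝ :=
  fun ω => (μ[fun ω' => (g ω') ^ 2 | m]) ω - ((μ[g | m]) ω) ^ 2

/-!
By the Markov property, uniform ellipticity of a single step says that the past
`σ(X_0, …, X_{n-1})` and the future `σ(X_n, …, X_k)` are independent up to a factor `C`. Comparing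
past, present and future pairwise, `σ(X_n)` and `σ(X_i : i ≠ n)` are independent up to the factor
`C ^ 3` on intersections of a past and a future event. These form a semiring, so the comparison
extends to the σ-algebra they generate, and conditioning on it distorts the expectation of a
nonnegative function of `X_n` by a factor of at most `C ^ 3`. As
`E[(Y - a)² | m] = Var(Y | m) + (E[Y | m] - a)²`, the choice `a = E Y` bounds `Var(Y | m)` from
above, and `a = E[Y | m]`, reached through rational `a`, bounds it from below.
-/

open scoped NNReal

section TrimDomination

variable {α : Type*} {m m₁ m₂ mα : MeasurableSpace α} {μ ν : Measure α}

/-- The restriction of a measure to a family of measurable sets, as an additive content. -/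
def addContentOfMeasure (μ : Measure α) {R : Set (Set α)} (hR : ∀ s ∈ R, MeasurableSet s) :
    AddContent ℝ≥0∞ R where
  toFun := μ
  empty' := measure_empty
  sUnion' I hI hdisj _ := by
    rw [Set.sUnion_eq_biUnion]
    exact measure_biUnion_finset hdisj fun s hs ↦ hR s (hI hs)

/-- Uniqueness of extension makes `μ` the Carathéodory extension of its values on `R`, whose outer
measure is the largest one bounded by these values. -/
lemma measure_le_of_isSetSemiring [IsFiniteMeasure μ] {R : Set (Set α)} (hR : IsSetSemiring R)
    (huniv : Set.univ ∈ R) (hgen : mα = MeasurableSpace.generateFrom R)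
    (hle : ∀ s ∈ R, ν s ≤ μ s) : ν ≤ μ := by
  have hmeas (s) (hs : s ∈ R) : MeasurableSet s :=
    hgen ▸ MeasurableSpace.measurableSet_generateFrom hs
  let content := addContentOfMeasure μ hmeas
  have hsub : content.IsSigmaSubadditive := fun _ _ _ ↦ measure_iUnion_le (μ := μ) _
  have hμ : content.measure hR hgen.le hsub = μ :=
    (ext_of_generate_finite R hgen hR.isPiSystem
      (fun s hs ↦ (content.measure_eq hR hgen hsub hs).symm)
      (content.measure_eq hR hgen hsub huniv).symm).symm
  have hν : ν.toOuterMeasure ≤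
      inducedOuterMeasure (fun s (_ : s ∈ R) ↦ μ s) hR.empty_mem measure_empty :=
    le_inducedOuterMeasure.2 hle
  refine Measure.le_iff.2 fun s hs ↦ (hν s).trans_eq ?_
  calc _ = content.measure hR hgen.le hsub s := (trim_measurableSet_eq _ hs).symm
    _ = μ s := by rw [hμ]

lemma isSetAlgebra_measurableSet (m : MeasurableSpace α) :
    IsSetAlgebra {s | MeasurableSet[m] s} where
  empty_mem := MeasurableSet.empty
  compl_mem _ hs := hs.compl
  union_mem _ _ hs ht := hs.union ht

lemma isSetSemiring_image2_inter {R₁ R₂ : Set (Set α)} (h₁ : IsSetRing R₁) (h₂ : IsSetRing R₂) :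
    IsSetSemiring (Set.image2 (· ∩ ·) R₁ R₂) where
  empty_mem := ⟨∅, h₁.empty_mem, ∅, h₂.empty_mem, Set.inter_self ∅⟩
  inter_mem := by
    rintro _ ⟨a, ha, b, hb, rfl⟩ _ ⟨a', ha', b', hb', rfl⟩
    exact ⟨a ∩ a', h₁.inter_mem ha ha', b ∩ b', h₂.inter_mem hb hb', Set.inter_inter_inter_comm ..⟩
  sdiff_eq_sUnion' := by
    classical
    rintro _ ⟨a, ha, b, hb, rfl⟩ _ ⟨a', ha', b', hb', rfl⟩
    refine ⟨{(a \ a') ∩ b, (a ∩ a') ∩ (b \ b')}, ?_, ?_, ?_⟩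
    · rw [Finset.coe_pair, Set.pair_subset_iff]
      exact ⟨⟨_, h₁.sdiff_mem ha ha', _, hb, rfl⟩,
        ⟨_, h₁.inter_mem ha ha', _, h₂.sdiff_mem hb hb', rfl⟩⟩
    · rw [Finset.coe_pair]
      exact Set.pairwise_pair_of_symm.2 fun _ ↦ Set.disjoint_left.2 fun _ hx hx' ↦ hx.1.2 hx'.1.2
    · ext x
      simp only [Set.mem_sdiff, Set.mem_inter_iff, Finset.coe_pair, Set.sUnion_insert,
        Set.sUnion_singleton, Set.mem_union]
      tauto

lemma generateFrom_image2_inter {R₁ R₂ : Set (Set α)} (h₁ : Set.univ ∈ R₁) (h₂ : Set.univ ∈ R₂) :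
    MeasurableSpace.generateFrom (Set.image2 (· ∩ ·) R₁ R₂) =
      MeasurableSpace.generateFrom R₁ ⊔ MeasurableSpace.generateFrom R₂ := by
  refine le_antisymm (MeasurableSpace.generateFrom_le ?_)
    (sup_le (MeasurableSpace.generateFrom_mono fun s hs ↦ ⟨s, hs, _, h₂, Set.inter_univ s⟩)
      (MeasurableSpace.generateFrom_mono fun t ht ↦ ⟨_, h₁, t, ht, Set.univ_inter t⟩))
  rintro _ ⟨s, hs, t, ht, rfl⟩
  exact MeasurableSet.inter
    (le_sup_left (a := MeasurableSpace.generateFrom R₁) s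
      (MeasurableSpace.measurableSet_generateFrom hs))
    (le_sup_right (a := MeasurableSpace.generateFrom R₁) t
      (MeasurableSpace.measurableSet_generateFrom ht))

lemma trim_le_trim_iff (hm : m ≤ mα) :
    ν.trim hm ≤ μ.trim hm ↔ ∀ s, MeasurableSet[m] s → ν s ≤ μ s := by
  rw [Measure.le_iff]
  exact forall₂_congr fun s hs ↦ by rw [trim_measurableSet_eq hm hs, trim_measurableSet_eq hm hs]

lemma trim_sup_le_trim_sup [IsFiniteMeasure μ] (hm : m₁ ⊔ m₂ ≤ mα)
    (hle : ∀ s t, MeasurableSet[m₁] s → MeasurableSet[m₂] t → ν (s ∩ t) ≤ μ (s ∩ t)) :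
    ν.trim hm ≤ μ.trim hm := by
  have halg₁ := isSetAlgebra_measurableSet m₁
  have halg₂ := isSetAlgebra_measurableSet m₂
  refine measure_le_of_isSetSemiring (isSetSemiring_image2_inter halg₁.isSetRing halg₂.isSetRing)
    ⟨Set.univ, halg₁.univ_mem, Set.univ, halg₂.univ_mem, Set.univ_inter _⟩ ?_ ?_
  · rw [generateFrom_image2_inter halg₁.univ_mem halg₂.univ_mem,
      @MeasurableSpace.generateFrom_measurableSet α m₁,
      @MeasurableSpace.generateFrom_measurableSet α m₂]
  · rintro _ ⟨s, hs, t, ht, rfl⟩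
    have hst : MeasurableSet[m₁ ⊔ m₂] (s ∩ t) :=
      MeasurableSet.inter (le_sup_left (a := m₁) s hs) (le_sup_right (a := m₁) t ht)
    rw [trim_measurableSet_eq hm hst, trim_measurableSet_eq hm hst]
    exact hle s t hs ht

lemma lintegral_le_of_trim_le (hm : m ≤ mα) (h : ν.trim hm ≤ μ.trim hm) {f : α → ℝ≥0∞}
    (hf : Measurable[m] f) : ∫⁻ x, f x ∂ν ≤ ∫⁻ x, f x ∂μ := by
  rw [← lintegral_trim hm hf, ← lintegral_trim hm hf]
  exact lintegral_mono' h le_rfl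

lemma integral_le_of_trim_le (hm : m ≤ mα) (h : ν.trim hm ≤ μ.trim hm) {f : α → ℝ}
    (hf : StronglyMeasurable[m] f) (hf₀ : 0 ≤ f) (hint : Integrable f μ) :
    ∫ x, f x ∂ν ≤ ∫ x, f x ∂μ := by
  rw [integral_trim hm hf, integral_trim hm hf]
  exact integral_mono_measure h (ae_of_all _ hf₀) (hint.trim hm hf)

end TrimDomination

/-- Two σ-algebras are quasi-independent with constant `c` if the joint probabilities of their
events agree, up to a factor `c` in either direction, with those of independent events. Uniform
ellipticity propagates along a Markov chain in this form. The σ-algebras need not lie below the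
ambient one. -/
structure QuasiIndep {α : Type*} (c : ℝ≥0) (m₁ m₂ : MeasurableSpace α) {mα : MeasurableSpace α}
    (μ : Measure α) : Prop where
  measure_inter_le ⦃s t : Set α⦄ :
    MeasurableSet[m₁] s → MeasurableSet[m₂] t → μ (s ∩ t) ≤ c * (μ s * μ t)
  mul_measure_le ⦃s t : Set α⦄ :
    MeasurableSet[m₁] s → MeasurableSet[m₂] t → μ s * μ t ≤ c * μ (s ∩ t)

namespace QuasiIndep

variable {α : Type*} {c d : ℝ≥0} {m₁ m₂ m₂' m₃ mα : MeasurableSpace α} {μ : Measure α}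

lemma symm (h : QuasiIndep c m₁ m₂ μ) : QuasiIndep c m₂ m₁ μ where
  measure_inter_le s t hs ht := by
    rw [Set.inter_comm, mul_comm (μ s)]
    exact h.measure_inter_le ht hs
  mul_measure_le s t hs ht := by
    rw [Set.inter_comm, mul_comm (μ s)]
    exact h.mul_measure_le ht hs

lemma mono_right (h : QuasiIndep c m₁ m₂ μ) (h₂ : m₂' ≤ m₂) : QuasiIndep c m₁ m₂' μ where
  measure_inter_le _ t hs ht := h.measure_inter_le hs (h₂ t ht)
  mul_measure_le _ t hs ht := h.mul_measure_le hs (h₂ t ht)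

lemma bot_left [IsProbabilityMeasure μ] (hc : 1 ≤ c) : QuasiIndep c ⊥ m₂ μ := by
  have hle (t : Set α) : μ t ≤ c * μ t := le_mul_of_one_le_left' (by exact_mod_cast hc)
  constructor <;> intro s t hs _ <;>
    rcases MeasurableSpace.measurableSet_bot_iff.1 hs with rfl | rfl <;> simp [hle]

lemma iff_trim_le_trim (h₂ : m₂ ≤ mα) :
    QuasiIndep c m₁ m₂ μ ↔ ∀ s, MeasurableSet[m₁] s →
      (μ.restrict s).trim h₂ ≤ ((c * μ s) • μ).trim h₂ ∧
        (μ s • μ).trim h₂ ≤ (c • μ.restrict s).trim h₂ := by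
  have hrestrict (s t : Set α) (ht : MeasurableSet[m₂] t) : μ.restrict s t = μ (s ∩ t) := by
    rw [Measure.restrict_apply (h₂ t ht), Set.inter_comm]
  simp only [trim_le_trim_iff]
  constructor
  · refine fun h s hs ↦ ⟨fun t ht ↦ ?_, fun t ht ↦ ?_⟩
    · rw [hrestrict s t ht, Measure.smul_apply, smul_eq_mul, mul_assoc]
      exact h.measure_inter_le hs ht
    · rw [Measure.smul_apply, Measure.smul_apply, hrestrict s t ht]
      exact h.mul_measure_le hs ht
  · refine fun h ↦ ⟨fun s t hs ht ↦ ?_, fun s t hs ht ↦ ?_⟩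
    · rw [← hrestrict s t ht, ← mul_assoc]
      exact (h s hs).1 t ht
    · rw [← hrestrict s t ht]
      exact (h s hs).2 t ht

lemma of_measure_inter [IsFiniteMeasure μ] (hm : m₂ ⊔ m₃ ≤ mα)
    (hle : ∀ s t u, MeasurableSet[m₁] s → MeasurableSet[m₂] t → MeasurableSet[m₃] u →
      μ (s ∩ (t ∩ u)) ≤ c * (μ s * μ (t ∩ u)))
    (hge : ∀ s t u, MeasurableSet[m₁] s → MeasurableSet[m₂] t → MeasurableSet[m₃] u →
      μ s * μ (t ∩ u) ≤ c * μ (s ∩ (t ∩ u))) :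
    QuasiIndep c m₁ (m₂ ⊔ m₃) μ := by
  refine (iff_trim_le_trim hm).2 fun s hs ↦ ?_
  have hrestrict (t u : Set α) (ht : MeasurableSet[m₂] t) (hu : MeasurableSet[m₃] u) :
      μ.restrict s (t ∩ u) = μ (s ∩ (t ∩ u)) := by
    rw [Measure.restrict_apply (.inter (hm t (le_sup_left (a := m₂) t ht))
      (hm u (le_sup_right (a := m₂) u hu))), Set.inter_comm]
  have : IsFiniteMeasure ((c * μ s) • μ) := Measure.smul_finite μ (by finiteness)
  constructor <;> refine trim_sup_le_trim_sup hm fun t u ht hu ↦ ?_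
  · rw [hrestrict t u ht hu, Measure.smul_apply, smul_eq_mul, mul_assoc]
    exact hle s t u hs ht hu
  · rw [Measure.smul_apply, Measure.smul_apply, hrestrict t u ht hu]
    exact hge s t u hs ht hu

lemma lintegral_restrict_le (h : QuasiIndep c m₁ m₂ μ) (h₂ : m₂ ≤ mα) {s : Set α}
    (hs : MeasurableSet[m₁] s) {f : α → ℝ≥0∞} (hf : Measurable[m₂] f) :
    ∫⁻ x in s, f x ∂μ ≤ c * μ s * ∫⁻ x, f x ∂μ := by
  simpa only [lintegral_smul_measure, smul_eq_mul] using
    lintegral_le_of_trim_le h₂ ((iff_trim_le_trim h₂).1 h s hs).1 hf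

lemma mul_lintegral_le (h : QuasiIndep c m₁ m₂ μ) (h₂ : m₂ ≤ mα) {s : Set α}
    (hs : MeasurableSet[m₁] s) {f : α → ℝ≥0∞} (hf : Measurable[m₂] f) :
    μ s * ∫⁻ x, f x ∂μ ≤ c * ∫⁻ x in s, f x ∂μ := by
  simpa only [lintegral_smul_measure, ENNReal.smul_def, smul_eq_mul] using
    lintegral_le_of_trim_le h₂ ((iff_trim_le_trim h₂).1 h s hs).2 hf

lemma sup_right [IsFiniteMeasure μ] (hm : m₂ ⊔ m₃ ≤ mα) (h₁₂ : QuasiIndep c m₁ m₂ μ)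
    (h₁₂₃ : QuasiIndep d (m₁ ⊔ m₂) m₃ μ) : QuasiIndep (c * d ^ 2) m₁ (m₂ ⊔ m₃) μ := by
  have hinter {s t : Set α} (hs : MeasurableSet[m₁] s) (ht : MeasurableSet[m₂] t) :
      MeasurableSet[m₁ ⊔ m₂] (s ∩ t) :=
    MeasurableSet.inter (le_sup_left (a := m₁) s hs) (le_sup_right (a := m₁) t ht)
  refine of_measure_inter hm (fun s t u hs ht hu ↦ ?_) fun s t u hs ht hu ↦ ?_ <;>
    rw [← Set.inter_assoc] <;> push_cast
  · calc μ (s ∩ t ∩ u) ≤ d * (μ (s ∩ t) * μ u) := h₁₂₃.measure_inter_le (hinter hs ht) hu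
      _ ≤ d * (c * (μ s * μ t) * μ u) := by gcongr; exact h₁₂.measure_inter_le hs ht
      _ = c * d * μ s * (μ t * μ u) := by ring
      _ ≤ c * d * μ s * (d * μ (t ∩ u)) := by
        gcongr c * d * μ s * ?_; exact h₁₂₃.mul_measure_le (le_sup_right (a := m₁) t ht) hu
      _ = c * d ^ 2 * (μ s * μ (t ∩ u)) := by ring
  · calc μ s * μ (t ∩ u) ≤ μ s * (d * (μ t * μ u)) := by
          gcongr; exact h₁₂₃.measure_inter_le (le_sup_right (a := m₁) t ht) hu
      _ = d * (μ s * μ t * μ u) := by ring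
      _ ≤ d * (c * μ (s ∩ t) * μ u) := by gcongr d * (?_ * μ u); exact h₁₂.mul_measure_le hs ht
      _ = c * d * (μ (s ∩ t) * μ u) := by ring
      _ ≤ c * d * (d * μ (s ∩ t ∩ u)) := by
        gcongr c * d * ?_; exact h₁₂₃.mul_measure_le (hinter hs ht) hu
      _ = c * d ^ 2 * μ (s ∩ t ∩ u) := by ring

/-- `hmarkov` is the Markov property: the conditional probability of an event of `m₃` given
`m₁ ⊔ m₂` has the `m₂`-measurable version `g`. -/
lemma sup_right_of_markov [IsFiniteMeasure μ] (hm : m₁ ⊔ m₂ ⊔ m₃ ≤ mα) (h : QuasiIndep c m₁ m₂ μ)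
    (hmarkov : ∀ u, MeasurableSet[m₃] u → ∃ g : α → ℝ≥0∞, Measurable[m₂] g ∧
      ∀ s, MeasurableSet[m₁ ⊔ m₂] s → μ (s ∩ u) = ∫⁻ x in s, g x ∂μ) :
    QuasiIndep c m₁ (m₂ ⊔ m₃) μ := by
  have h₂ : m₂ ≤ mα := (le_sup_right.trans le_sup_left).trans hm
  have hm₂₃ : m₂ ⊔ m₃ ≤ mα := (sup_le_sup_right le_sup_right m₃).trans hm
  have hcond (t u : Set α) (ht : MeasurableSet[m₂] t) (hu : MeasurableSet[m₃] u) :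
      ∃ f : α → ℝ≥0∞, Measurable[m₂] f ∧ μ (t ∩ u) = ∫⁻ x, f x ∂μ ∧
        ∀ s, MeasurableSet[m₁] s → μ (s ∩ (t ∩ u)) = ∫⁻ x in s, f x ∂μ := by
    obtain ⟨g, hg, hgu⟩ := hmarkov u hu
    have ht' : MeasurableSet[m₁ ⊔ m₂] t := le_sup_right (a := m₁) t ht
    refine ⟨t.indicator g, hg.indicator ht, ?_, fun s hs ↦ ?_⟩
    · rw [lintegral_indicator (h₂ t ht), hgu t ht']
    · rw [setLIntegral_indicator (h₂ t ht), Set.inter_comm t s, ← Set.inter_assoc,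
        hgu _ (MeasurableSet.inter (le_sup_left (a := m₁) s hs) ht')]
  refine of_measure_inter hm₂₃ (fun s t u hs ht hu ↦ ?_) fun s t u hs ht hu ↦ ?_ <;>
    obtain ⟨f, hf, htu, hstu⟩ := hcond t u ht hu <;> rw [htu, hstu s hs]
  · rw [← mul_assoc]
    exact h.lintegral_restrict_le h₂ hs hf
  · exact h.mul_lintegral_le h₂ hs hf

end QuasiIndep

section ConditionalMoments

variable {α : Type*} {m mα : MeasurableSpace α} {μ : Measure α}

lemma condExp_le_condExp_of_setIntegral_le (hm : m ≤ mα) [SigmaFinite (μ.trim hm)] {f g : α → ℝ}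
    (hf : Integrable f μ) (hg : Integrable g μ)
    (hle : ∀ s, MeasurableSet[m] s → ∫ x in s, f x ∂μ ≤ ∫ x in s, g x ∂μ) :
    μ[f | m] ≤ᵐ[μ] μ[g | m] := by
  refine ae_le_of_ae_le_trim (hm := hm) (ae_le_of_forall_setIntegral_le
    (integrable_condExp.trim hm stronglyMeasurable_condExp)
    (integrable_condExp.trim hm stronglyMeasurable_condExp) fun s hs _ ↦ ?_)
  rw [← setIntegral_trim hm stronglyMeasurable_condExp hs,
    ← setIntegral_trim hm stronglyMeasurable_condExp hs, setIntegral_condExp hm hf hs,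
    setIntegral_condExp hm hg hs]
  exact hle s hs

lemma condExp_sub_const_sq [IsFiniteMeasure μ] (hm : m ≤ mα) {Y : α → ℝ} (hY : MemLp Y 2 μ)
    (a : ℝ) :
    ∀ᵐ x ∂μ, (μ[fun y ↦ (Y y - a) ^ 2 | m]) x = condVar μ m Y x + ((μ[Y | m]) x - a) ^ 2 := by
  have hYint : Integrable Y μ := hY.integrable one_le_two
  have hexpand : (fun y ↦ (Y y - a) ^ 2) =
      (fun y ↦ Y y ^ 2) + ((-2 * a) • Y + fun _ ↦ a ^ 2) := by
    ext y
    simp only [Pi.add_apply, Pi.smul_apply, smul_eq_mul]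
    ring
  rw [hexpand]
  filter_upwards [
    condExp_add hY.integrable_sq ((hYint.smul (-2 * a)).add (integrable_const (a ^ 2))) m,
    condExp_add (hYint.smul (-2 * a)) (integrable_const (a ^ 2)) m,
    condExp_smul (μ := μ) (-2 * a) Y m] with x hsq hlin hsmul
  rw [hsq, Pi.add_apply, hlin, Pi.add_apply, hsmul, condExp_const hm, Pi.smul_apply, smul_eq_mul,
    condVar]
  ring

lemma variance_le_integral_sub_const_sq [IsProbabilityMeasure μ] {Y : α → ℝ}
    (hY : AEStronglyMeasurable Y μ) (a : ℝ) : variance Y μ ≤ ∫ x, (Y x - a) ^ 2 ∂μ := by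
  rw [← variance_sub_const hY a]
  exact variance_le_expectation_sq (hY.sub aestronglyMeasurable_const)

end ConditionalMoments

namespace QuasiIndep

variable {α : Type*} {c : ℝ≥0} {m₁ m₂ mα : MeasurableSpace α} {μ : Measure α} {f Y : α → ℝ}

lemma condExp_le [IsFiniteMeasure μ] (h : QuasiIndep c m₁ m₂ μ) (h₁ : m₁ ≤ mα) (h₂ : m₂ ≤ mα)
    (hf : StronglyMeasurable[m₁] f) (hf₀ : 0 ≤ f) (hint : Integrable f μ) :
    ∀ᵐ x ∂μ, (μ[f | m₂]) x ≤ c * ∫ y, f y ∂μ := by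
  have hset (s : Set α) (hs : MeasurableSet[m₂] s) :
      ∫ x in s, f x ∂μ ≤ ∫ _ in s, c * ∫ y, f y ∂μ ∂μ := by
    calc ∫ x in s, f x ∂μ ≤ ∫ x, f x ∂((c * μ s) • μ) :=
          integral_le_of_trim_le h₁ ((iff_trim_le_trim h₁).1 h.symm s hs).1 hf hf₀
            (hint.smul_measure (by finiteness))
      _ = ∫ _ in s, c * ∫ y, f y ∂μ ∂μ := by
        rw [integral_smul_measure, setIntegral_const, ENNReal.toReal_mul, ENNReal.coe_toReal,
          measureReal_def, smul_eq_mul, smul_eq_mul]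
        ring
  filter_upwards [condExp_le_condExp_of_setIntegral_le h₂ hint (integrable_const _) hset] with x hx
  rwa [condExp_const h₂] at hx

lemma integral_le_mul_condExp [IsFiniteMeasure μ] (h : QuasiIndep c m₁ m₂ μ) (h₁ : m₁ ≤ mα)
    (h₂ : m₂ ≤ mα) (hf : StronglyMeasurable[m₁] f) (hf₀ : 0 ≤ f) (hint : Integrable f μ) :
    ∀ᵐ x ∂μ, ∫ y, f y ∂μ ≤ c * (μ[f | m₂]) x := by
  have hset (s : Set α) (hs : MeasurableSet[m₂] s) :
      ∫ _ in s, (∫ y, f y ∂μ) ∂μ ≤ ∫ x in s, ((c : ℝ) • f) x ∂μ := by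
    calc ∫ _ in s, (∫ y, f y ∂μ) ∂μ = ∫ x, f x ∂(μ s • μ) := by
          rw [integral_smul_measure, setIntegral_const, measureReal_def]
      _ ≤ ∫ x, f x ∂(c • μ.restrict s) :=
          integral_le_of_trim_le h₁ ((iff_trim_le_trim h₁).1 h.symm s hs).2 hf hf₀
            (hint.restrict.smul_measure_nnreal)
      _ = ∫ x in s, ((c : ℝ) • f) x ∂μ := by
        simp only [integral_smul_nnreal_measure, Pi.smul_apply, integral_smul, NNReal.smul_def]
  filter_upwards [condExp_le_condExp_of_setIntegral_le h₂ (integrable_const _)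
    (hint.smul (c : ℝ)) hset, condExp_smul (c : ℝ) f m₂ (μ := μ)] with x hx hsmul
  rw [condExp_const h₂] at hx
  exact hx.trans_eq hsmul

lemma condVar_le [IsProbabilityMeasure μ] (h : QuasiIndep c m₁ m₂ μ) (h₁ : m₁ ≤ mα)
    (h₂ : m₂ ≤ mα) (hY : StronglyMeasurable[m₁] Y) (hY₂ : MemLp Y 2 μ) :
    ∀ᵐ x ∂μ, condVar μ m₂ Y x ≤ c * variance Y μ := by
  set a := ∫ x, Y x ∂μ
  filter_upwards [condExp_sub_const_sq h₂ hY₂ a,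
    h.condExp_le h₁ h₂ ((hY.sub stronglyMeasurable_const).pow 2) (fun _ ↦ sq_nonneg _)
      (hY₂.sub (memLp_const a)).integrable_sq] with x hx hle
  calc condVar μ m₂ Y x ≤ condVar μ m₂ Y x + ((μ[Y | m₂]) x - a) ^ 2 :=
        le_add_of_nonneg_right (sq_nonneg _)
    _ = (μ[fun y ↦ (Y y - a) ^ 2 | m₂]) x := hx.symm
    _ ≤ c * ∫ y, (Y y - a) ^ 2 ∂μ := hle
    _ = c * variance Y μ := by rw [variance_eq_integral hY₂.aestronglyMeasurable.aemeasurable]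

lemma variance_le_mul_condVar [IsProbabilityMeasure μ] (h : QuasiIndep c m₁ m₂ μ) (h₁ : m₁ ≤ mα)
    (h₂ : m₂ ≤ mα) (hY : StronglyMeasurable[m₁] Y) (hY₂ : MemLp Y 2 μ) :
    ∀ᵐ x ∂μ, variance Y μ ≤ c * condVar μ m₂ Y x := by
  have hconst (a : ℝ) :
      ∀ᵐ x ∂μ, variance Y μ ≤ c * (condVar μ m₂ Y x + ((μ[Y | m₂]) x - a) ^ 2) := by
    filter_upwards [condExp_sub_const_sq h₂ hY₂ a,
      h.integral_le_mul_condExp h₁ h₂ ((hY.sub stronglyMeasurable_const).pow 2)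
        (fun _ ↦ sq_nonneg _) (hY₂.sub (memLp_const a)).integrable_sq] with x hx hle
    rw [← hx]
    exact (variance_le_integral_sub_const_sq hY₂.aestronglyMeasurable a).trans hle
  -- The bound holds for all rational `a` at once, hence for `a = μ[Y | m₂] x` by continuity.
  filter_upwards [ae_all_iff.2 fun q : ℚ ↦ hconst q] with x hrat
  have hreal (a : ℝ) : variance Y μ ≤ c * (condVar μ m₂ Y x + ((μ[Y | m₂]) x - a) ^ 2) :=
    Rat.denseRange_cast.induction_on a (isClosed_le (by fun_prop) (by fun_prop)) hrat
  simpa using hreal ((μ[Y | m₂]) x)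

end QuasiIndep

section SigmaFinset

variable {Ω E : Type*} {mΩ : MeasurableSpace Ω} [MeasurableSpace E] {X : ℕ → Ω → E}

lemma sigmaFinset_mono {s t : Finset ℕ} (h : s ⊆ t) : sigmaFinset X s ≤ sigmaFinset X t :=
  biSup_mono h

lemma sigmaFinset_le (hX : ∀ n, Measurable (X n)) (s : Finset ℕ) : sigmaFinset X s ≤ mΩ :=
  iSup₂_le fun n _ ↦ (hX n).comap_le

lemma sigmaFinset_empty : sigmaFinset X ∅ = ⊥ := by
  simp only [sigmaFinset, Finset.notMem_empty, iSup_false, iSup_bot]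

lemma sigmaFinset_union (s t : Finset ℕ) :
    sigmaFinset X (s ∪ t) = sigmaFinset X s ⊔ sigmaFinset X t :=
  Finset.iSup_union

lemma sigmaFinset_singleton (n : ℕ) :
    sigmaFinset X {n} = MeasurableSpace.comap (X n) inferInstance :=
  Finset.iSup_singleton n _

lemma measurable_sigmaFinset {s : Finset ℕ} {n : ℕ} (hn : n ∈ s) :
    Measurable[sigmaFinset X s] (X n) :=
  measurable_iff_comap_le.2 (le_biSup (fun n ↦ MeasurableSpace.comap (X n) inferInstance) hn)

lemma sigmaFinset_range (n : ℕ) :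
    sigmaFinset X (range n) = ⨆ i : Fin n, MeasurableSpace.comap (X i) inferInstance :=
  le_antisymm (iSup₂_le fun i hi ↦ le_iSup (fun i : Fin n ↦ MeasurableSpace.comap (X i) _)
      ⟨i, Finset.mem_range.1 hi⟩)
    (iSup_le fun i ↦ (measurable_sigmaFinset (Finset.mem_range.2 i.2)).comap_le)

end SigmaFinset

namespace UEChain

variable {Ω E : Type*} {mΩ : MeasurableSpace Ω} [MeasurableSpace E]
  {μ : Measure Ω} {X : ℕ → Ω → E} {κ : ℕ → Kernel E E} {C : ℝ}

lemma one_le (h : UEChain μ X κ C) : 1 ≤ C := by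
  obtain ⟨_, hX, _, -, hell⟩ := h
  obtain ⟨ω, hω, -⟩ := (hell 0 Set.univ .univ).exists
  simpa [Measure.map_apply (hX 1) MeasurableSet.univ] using hω

lemma measure_inter_preimage (h : UEChain μ X κ C) (n : ℕ) {s : Set Ω}
    (hs : MeasurableSet[sigmaFinset X (range (n + 1))] s) {A : Set E} (hA : MeasurableSet A) :
    μ (s ∩ X (n + 1) ⁻¹' A) = ∫⁻ ω in s, κ n (X n ω) A ∂μ := by
  obtain ⟨_, hX, _, hmarkov, -⟩ := h
  have hm := sigmaFinset_le hX (range (n + 1))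
  have hpre : MeasurableSet (X (n + 1) ⁻¹' A) := hX (n + 1) hA
  have hint : Integrable ((X (n + 1) ⁻¹' A).indicator fun _ ↦ (1 : ℝ)) μ :=
    (integrable_const 1).indicator hpre
  have hcond : μ[(X (n + 1) ⁻¹' A).indicator fun _ ↦ (1 : ℝ) | sigmaFinset X (range (n + 1))]
      =ᵐ[μ] fun ω ↦ (κ n (X n ω)).real A := by
    rw [sigmaFinset_range]
    exact hmarkov n A hA
  have hfin : ∫⁻ ω in s, κ n (X n ω) A ∂μ ≠ ∞ :=
    ((setLIntegral_mono' (hm s hs) fun ω _ ↦ prob_le_one).trans_lt (by simp)).ne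
  rw [← ENNReal.toReal_eq_toReal_iff' (measure_ne_top _ _) hfin]
  calc μ.real (s ∩ X (n + 1) ⁻¹' A)
      = ∫ ω in s, (X (n + 1) ⁻¹' A).indicator (fun _ ↦ (1 : ℝ)) ω ∂μ := by
        rw [setIntegral_indicator hpre, setIntegral_const, smul_eq_mul, mul_one]
    _ = ∫ ω in s, (κ n (X n ω)).real A ∂μ := by
        rw [← setIntegral_condExp hm hint hs]
        exact setIntegral_congr_ae (hm s hs) (hcond.mono fun _ hω _ ↦ hω)
    _ = (∫⁻ ω in s, κ n (X n ω) A ∂μ).toReal :=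
        integral_toReal ((Kernel.measurable_coe _ hA).comp (hX n)).aemeasurable
          (ae_of_all _ fun _ ↦ measure_lt_top _ _)

lemma quasiIndep_range_singleton (h : UEChain μ X κ C) (n : ℕ) :
    QuasiIndep C.toNNReal (sigmaFinset X (range n)) (sigmaFinset X {n}) μ := by
  have ⟨_, hX, _, _, hell⟩ := h
  rw [sigmaFinset_singleton]
  cases n with
  | zero =>
    rw [range_zero, sigmaFinset_empty]
    exact QuasiIndep.bot_left (by simpa using h.one_le)
  | succ n =>
    have hκ {A : Set E} (hA : MeasurableSet A) : Measurable fun ω ↦ κ n (X n ω) A :=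
      (Kernel.measurable_coe _ hA).comp (hX n)
    constructor <;> rintro s _ hs ⟨A, hA, rfl⟩ <;>
      rw [h.measure_inter_preimage n hs hA, ← Measure.map_apply (hX (n + 1)) hA, mul_comm (μ s),
        ← setLIntegral_const]
    · rw [← lintegral_const_mul _ measurable_const]
      exact lintegral_mono_ae (ae_restrict_of_ae ((hell n A hA).mono fun _ hω ↦ hω.1))
    · rw [← lintegral_const_mul _ (hκ hA)]
      exact lintegral_mono_ae (ae_restrict_of_ae ((hell n A hA).mono fun _ hω ↦ hω.2))

lemma quasiIndep_range_Icc (h : UEChain μ X κ C) {n k : ℕ} (hnk : n ≤ k) :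
    QuasiIndep C.toNNReal (sigmaFinset X (range n)) (sigmaFinset X (Icc n k)) μ := by
  have ⟨_, hX, _⟩ := h
  induction k, hnk using Nat.le_induction with
  | base => simpa only [Icc_self] using h.quasiIndep_range_singleton n
  | succ k hnk ih =>
    have hpast : sigmaFinset X (range n) ⊔ sigmaFinset X (Icc n k) =
        sigmaFinset X (range (k + 1)) := by
      rw [← sigmaFinset_union]
      congr 1
      grind
    rw [show Icc n (k + 1) = Icc n k ∪ {k + 1} by grind, sigmaFinset_union]
    refine ih.sup_right_of_markov ?_ fun u hu ↦ ?_
    · simpa only [← sigmaFinset_union] using sigmaFinset_le hX _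
    · rw [sigmaFinset_singleton] at hu
      obtain ⟨A, hA, rfl⟩ := hu
      refine ⟨fun ω ↦ κ k (X k ω) A, (Kernel.measurable_coe _ hA).comp
        (measurable_sigmaFinset (right_mem_Icc.2 hnk)), fun s hs ↦ ?_⟩
      exact h.measure_inter_preimage k (hpast ▸ hs) hA

lemma quasiIndep_of_notMem (h : UEChain μ X κ C) {n : ℕ} {𝓑 : Finset ℕ} (hn : n ∉ 𝓑) :
    QuasiIndep (C.toNNReal ^ 3) (sigmaFinset X {n}) (sigmaFinset X 𝓑) μ := by
  have ⟨_, hX, _⟩ := h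
  obtain ⟨M, hM⟩ := 𝓑.exists_nat_subset_range
  have hpast := (h.quasiIndep_range_singleton n).symm
  have hfuture : QuasiIndep C.toNNReal (sigmaFinset X {n} ⊔ sigmaFinset X (range n))
      (sigmaFinset X (Icc (n + 1) (n + 1 + M))) μ := by
    rw [← sigmaFinset_union, show {n} ∪ range n = range (n + 1) by grind]
    exact h.quasiIndep_range_Icc (Nat.le_add_right _ _)
  rw [show C.toNNReal ^ 3 = C.toNNReal * C.toNNReal ^ 2 from pow_succ' _ 2]
  refine (hpast.sup_right ?_ hfuture).mono_right ?_ <;> rw [← sigmaFinset_union]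
  · exact sigmaFinset_le hX _
  · exact sigmaFinset_mono fun i hi ↦ by grind

end UEChain

theorem conditional_variance_comparable_general {Ω E : Type*} [MeasurableSpace Ω]
    [MeasurableSpace E] {μ : Measure Ω} {X : ℕ → Ω → E} {κ : ℕ → Kernel E E} {C : ℝ}
    (h : UEChain μ X κ C) {n : ℕ} {f : E → ℝ} (hf : Measurable f)
    (hf₂ : MemLp (fun ω ↦ f (X n ω)) 2 μ) {𝓑 : Finset ℕ} (hn : n ∉ 𝓑) :
    ∀ᵐ ω ∂μ,
      (C ^ 3)⁻¹ * variance (fun ω' ↦ f (X n ω')) μ ≤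
          condVar μ (sigmaFinset X 𝓑) (fun ω' ↦ f (X n ω')) ω ∧
        condVar μ (sigmaFinset X 𝓑) (fun ω' ↦ f (X n ω')) ω ≤
          C ^ 3 * variance (fun ω' ↦ f (X n ω')) μ := by
  have ⟨_, hX, _⟩ := h
  have hC : 0 < C := zero_lt_one.trans_le h.one_le
  have hcoe : ((C.toNNReal ^ 3 : ℝ≥0) : ℝ) = C ^ 3 := by rw [NNReal.coe_pow, C.coe_toNNReal hC.le]
  have hle (s : Finset ℕ) := sigmaFinset_le hX s
  have hindep := h.quasiIndep_of_notMem hn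
  have hY : StronglyMeasurable[sigmaFinset X {n}] fun ω ↦ f (X n ω) :=
    (hf.comp (measurable_sigmaFinset (mem_singleton_self n))).stronglyMeasurable
  filter_upwards [hindep.variance_le_mul_condVar (hle _) (hle _) hY hf₂,
    hindep.condVar_le (hle _) (hle _) hY hf₂] with ω hlower hupper
  rw [hcoe] at hlower hupper
  exact ⟨(inv_mul_le_iff₀ (by positivity)).2 hlower, hupper⟩

/-- Lemma 3.8(i). There is `C₂ ≥ 1`, depending only on the ellipticity
constant `C`, such that for every `𝓑 ⊆ {1,…,N}`, `𝓔 = σ(X_n : n ∈ 𝓑)`, every `n ∉ 𝓑` and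
a.e. sample point, `C₂⁻¹ Var(Y_n) ≤ Var(Y_n | 𝓔) ≤ C₂ Var(Y_n)`. -/
theorem conditional_variance_comparable (C : ℝ) (hC : 1 < C) :
    ∃ C₂ : ℝ, 1 ≤ C₂ ∧
      ∀ (Ω E : Type) [MeasurableSpace Ω] [MeasurableSpace E]
        (μ : Measure Ω) (X : ℕ → Ω → E) (κ : ℕ → Kernel E E) (f : ℕ → E → ℤ) (K : ℕ),
        UEChain μ X κ C →
        (∀ n, Measurable (f n)) →
        (∀ n ω, |f n (X n ω)| ≤ (K : ℤ)) →
        ∀ (N : ℕ) (𝓑 : Finset ℕ), 𝓑 ⊆ Finset.Icc 1 N →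
          ∀ n, n ∉ 𝓑 →
            ∀ᵐ ω ∂μ,
              C₂⁻¹ * variance (fun ω' => ((f n (X n ω') : ℝ))) μ ≤
                  condVar μ (sigmaFinset X 𝓑) (fun ω' => ((f n (X n ω') : ℝ))) ω ∧
                condVar μ (sigmaFinset X 𝓑) (fun ω' => ((f n (X n ω') : ℝ))) ω ≤
                  C₂ * variance (fun ω' => ((f n (X n ω') : ℝ))) μ := by
  refine ⟨C ^ 3, one_le_pow₀ hC.le, fun Ω E _ _ μ X κ f K h hf hK _ _ _ n hn ↦ ?_⟩
  have ⟨_, hX, _⟩ := h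
  have hfn : Measurable fun x ↦ (f n x : ℝ) := measurable_from_top.comp (hf n)
  exact conditional_variance_comparable_general h hfn
    (MemLp.of_bound (hfn.comp (hX n)).aestronglyMeasurable K
      (ae_of_all _ fun ω ↦ by simpa using mod_cast hK n ω)) hn

end EdgeworthMC
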